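/- Fix μ ∈ ℝ, σ > 0, ξ with ξ > −1/2 and ξ ≠ 0, and integer r ≥ 1, and let l^{(r)}(x | μ,σ,ξ) = −r log σ − (1+ξ z_r)^{−1/ξ} − (1/ξ + 1) Σ_{j=1}^r log(1+ξ z_j) be the GEV_r log-likelihood of a single observation x ∈ D_r, with z_j = (x_j − μ)/σ. Then the score has expectation zero under the GEV_r distribution: E[∂l^{(r)}/∂μ (X | μ,σ,ξ)] = 0, E[∂l^{(r)}/∂σ (X | μ,σ,ξ)] = 0, and E[∂l^{(r)}/∂ξ (X | μ,σ,ξ)] = 0, where X = (X_1,…,X_r) has density f_r(· | μ,σ,ξ). -/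

import Mathlib

open MeasureTheory ProbabilityTheory Real Filter Topology

/-- The joint density of the `r` largest order statistics limit (GEV_r) with
location `μ`, scale `σ`, and shape `ξ ≠ 0`.  The coordinates are in decreasing
order: `x 0` is `x_1` (the largest) and `x ⟨r-1,_⟩` is `x_r`. -/
noncomputable def gevrDensity (μ σ ξ : ℝ) (r : ℕ) (x : Fin r → ℝ) : ℝ :=
  if h : 0 < r ∧ StrictAnti x ∧ (∀ j, 0 < 1 + ξ * ((x j - μ) / σ)) then
    (σ ^ r)⁻¹ * Real.exp
      (-(1 + ξ * ((x ⟨r - 1, Nat.sub_lt h.1 Nat.one_pos⟩ - μ) / σ)) ^ (-1 / ξ)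
        - (1 / ξ + 1) * ∑ j, Real.log (1 + ξ * ((x j - μ) / σ)))
  else 0

/-- The GEV_r probability measure on `ℝ^r`, given by the density `gevrDensity`. -/
noncomputable def gevrMeasure (μ σ ξ : ℝ) (r : ℕ) : Measure (Fin r → ℝ) :=
  MeasureTheory.volume.withDensity fun x => ENNReal.ofReal (gevrDensity μ σ ξ r x)

/-- The GEV_r log-likelihood contribution of a single block `x`:
`l^{(r)}(x | μ,σ,ξ) = −r log σ − (1+ξz_r)^{−1/ξ} − (1/ξ+1) Σ_j log(1+ξz_j)`. -/
noncomputable def gevrLogLik (r : ℕ) (x : Fin r → ℝ) (μ σ ξ : ℝ) : ℝ :=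
  if h : 0 < r then
    -(r : ℝ) * Real.log σ
      - (1 + ξ * ((x ⟨r - 1, Nat.sub_lt h Nat.one_pos⟩ - μ) / σ)) ^ (-1 / ξ)
      - (1 / ξ + 1) * ∑ j, Real.log (1 + ξ * ((x j - μ) / σ))
  else 0

/-!
A GEV_r vector collects the `r` largest points of a Poisson process on the line whose expected
number of points above `x` is `(1 + ξ (x - μ) / σ) ^ (-1 / ξ)`. The time change `x ↦ t` by this
expected number turns the vector into the first `r` arrival times `t_1 < ⋯ < t_r` of a unit-rate
Poisson process.

When the parameters move along a curve, the time of a fixed point moves with some velocity `h t`.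
By the symmetry of mixed partial derivatives the logarithm of the intensity then moves with velocity
`h' t`, so the score is `∑ j, h' t_j - h t_r`. Since `h 0 = 0`, the last term is the integral of
`h'` up to time `t_r`, so the score is a sum over arrivals minus its compensator. Each arrival
contributes zero in conditional expectation given the past, because
`∫ t in Ioi s, exp (s - t) * (h' t - h t) = -h s`.
-/

open Set

/-! ### Functions with a Laplace transform -/

/-- The Laplace transform of `g` converges absolutely on all of `(0, ∞)`. -/
def LaplaceIntegrable (g : ℝ → ℝ) : Prop :=
  ∀ c > 0, IntegrableOn (fun t => exp (-c * t) * g t) (Ioi 0)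

namespace LaplaceIntegrable

variable {f g : ℝ → ℝ}

lemma add (hf : LaplaceIntegrable f) (hg : LaplaceIntegrable g) :
    LaplaceIntegrable fun t => f t + g t := fun c hc => by
  simp only [mul_add]
  exact (hf c hc).add (hg c hc)

lemma sub (hf : LaplaceIntegrable f) (hg : LaplaceIntegrable g) :
    LaplaceIntegrable fun t => f t - g t := fun c hc => by
  simp only [mul_sub]
  exact (hf c hc).sub (hg c hc)

lemma const_mul (hf : LaplaceIntegrable f) (a : ℝ) :
    LaplaceIntegrable fun t => a * f t := fun c hc => by
  simp only [mul_left_comm _ a]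
  exact Integrable.const_mul (hf c hc) a

lemma congr (hf : LaplaceIntegrable f) (hfg : ∀ t, 0 < t → f t = g t) : LaplaceIntegrable g :=
  fun c hc => (hf c hc).congr_fun (fun t ht => by simp only [hfg t ht]) measurableSet_Ioi

lemma mono (hg : LaplaceIntegrable g) (hf : Measurable f) (hfg : ∀ t, 0 < t → |f t| ≤ g t) :
    LaplaceIntegrable f := fun c hc => by
  refine Integrable.mono' (hg c hc) (by fun_prop) ?_
  filter_upwards [ae_restrict_mem measurableSet_Ioi] with t ht
  rw [norm_mul, norm_eq_abs, abs_exp]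
  exact mul_le_mul_of_nonneg_left (hfg t ht) (exp_pos _).le

end LaplaceIntegrable

lemma laplaceIntegrable_rpow {s : ℝ} (hs : -1 < s) : LaplaceIntegrable fun t => t ^ s :=
  fun c hc => by
    simpa [mul_comm] using integrableOn_rpow_mul_exp_neg_mul_rpow (p := 1) hs one_pos hc

lemma laplaceIntegrable_const (a : ℝ) : LaplaceIntegrable fun _ => a := by
  simpa using (laplaceIntegrable_rpow (s := 0) (by norm_num)).const_mul a

lemma abs_log_le_rpow_add_rpow_neg_div {t ε : ℝ} (ht : 0 < t) (hε : 0 < ε) :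
    |log t| ≤ (t ^ ε + t ^ (-ε)) / ε := by
  have hlog := log_le_rpow_div ht.le hε
  have hlog_inv := log_le_rpow_div (inv_pos.2 ht).le hε
  rw [log_inv, inv_rpow ht.le, ← rpow_neg ht.le] at hlog_inv
  have hpos : 0 < t ^ ε / ε := by positivity
  have hneg : 0 < t ^ (-ε) / ε := by positivity
  rw [add_div, abs_le]
  constructor <;> linarith

lemma laplaceIntegrable_rpow_mul_log {s : ℝ} (hs : -1 < s) :
    LaplaceIntegrable fun t => t ^ s * log t := by
  obtain ⟨ε, hε, hsε⟩ : ∃ ε > 0, -1 < s - ε := ⟨(s + 1) / 2, by linarith, by linarith⟩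
  have hdom := ((laplaceIntegrable_rpow (s := s + ε) (by linarith)).add
    (laplaceIntegrable_rpow hsε)).const_mul ε⁻¹
  refine hdom.mono (by fun_prop) fun t ht => ?_
  calc |t ^ s * log t| = t ^ s * |log t| := by rw [abs_mul, abs_of_pos (rpow_pos_of_pos ht s)]
    _ ≤ t ^ s * ((t ^ ε + t ^ (-ε)) / ε) := by
        gcongr; exact abs_log_le_rpow_add_rpow_neg_div ht hε
    _ = ε⁻¹ * (t ^ (s + ε) + t ^ (s - ε)) := by
        rw [sub_eq_add_neg, rpow_add ht, rpow_add ht]; ring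

/-! ### Arrival times of a unit-rate Poisson process -/

/-- The possible values of the first `n` arrival times of a point process on `(0, ∞)`. -/
def arrivalSet (n : ℕ) : Set (Fin n → ℝ) := {u | StrictMono u ∧ ∀ i, 0 < u i}

lemma measurableSet_arrivalSet (n : ℕ) : MeasurableSet (arrivalSet n) := by
  simp only [arrivalSet, StrictMono, measurableSet_setOfPred]
  fun_prop

lemma norm_eq_last_of_mem_arrivalSet {n : ℕ} {u : Fin (n + 1) → ℝ} (hu : u ∈ arrivalSet (n + 1)) :
    ‖u‖ = u (Fin.last n) := by
  refine le_antisymm ((pi_norm_le_iff_of_nonneg (hu.2 _).le).2 fun i => ?_)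
    ((le_abs_self _).trans (norm_le_pi_norm u _))
  rw [norm_eq_abs, abs_of_pos (hu.2 i)]
  exact hu.1.monotone (Fin.le_last i)

lemma snoc_mem_arrivalSet_iff {n : ℕ} {u : Fin n → ℝ} {t : ℝ} :
    (Fin.snoc u t : Fin (n + 1) → ℝ) ∈ arrivalSet (n + 1) ↔ u ∈ arrivalSet n ∧ ‖u‖ < t := by
  constructor
  · rintro ⟨hmono, hpos⟩
    have hu : u ∈ arrivalSet n := by
      refine ⟨fun i j hij => ?_, fun i => ?_⟩
      · simpa using hmono (Fin.castSucc_lt_castSucc_iff.2 hij)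
      · simpa using hpos i.castSucc
    refine ⟨hu, (pi_norm_lt_iff (by simpa using hpos (Fin.last n))).2 fun i => ?_⟩
    rw [norm_eq_abs, abs_of_pos (hu.2 i)]
    simpa using hmono (Fin.castSucc_lt_last i)
  · rintro ⟨⟨hmono, hpos⟩, hut⟩
    have hlt : ∀ i, u i < t := fun i =>
      ((le_abs_self _).trans (norm_le_pi_norm u i)).trans_lt hut
    refine ⟨fun i j hij => ?_, Fin.lastCases ?_ fun i => ?_⟩
    · obtain ⟨i, rfl⟩ := Fin.exists_castSucc_eq.2 (Fin.ne_last_of_lt hij)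
      cases j using Fin.lastCases with
      | last => simpa using hlt i
      | cast j => simpa using hmono (Fin.castSucc_lt_castSucc_iff.1 hij)
    · simpa using (norm_nonneg u).trans_lt hut
    · simpa using hpos i

lemma setIntegral_arrivalSet_succ {n : ℕ} {F : (Fin (n + 1) → ℝ) → ℝ}
    (hF : IntegrableOn F (arrivalSet (n + 1))) :
    ∫ v in arrivalSet (n + 1), F v =
      ∫ u in arrivalSet n, ∫ t in Ioi ‖u‖, F (Fin.snoc u t) := by
  let e := (MeasurableEquiv.piFinSuccAbove (fun _ : Fin (n + 1) => ℝ) (Fin.last n)).symm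
  have he : MeasurePreserving e :=
    (volume_preserving_piFinSuccAbove (fun _ : Fin (n + 1) => ℝ) (Fin.last n)).symm
  have he_apply (u : Fin n → ℝ) (t : ℝ) : e (t, u) = Fin.snoc u t := Fin.insertNth_last' t u
  have hint := (he.integrable_comp_emb e.measurableEmbedding).2
    ((integrable_indicator_iff (measurableSet_arrivalSet _)).2 hF)
  rw [← integral_indicator (measurableSet_arrivalSet _), ← he.integral_comp']
  refine (integral_prod_symm _ hint).trans ?_
  rw [← integral_indicator (measurableSet_arrivalSet n)]
  congr 1 with u
  simp only [Function.comp_apply, he_apply]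
  by_cases hu : u ∈ arrivalSet n
  · rw [indicator_of_mem hu, ← integral_indicator measurableSet_Ioi]
    refine integral_congr_ae (ae_of_all _ fun t => ?_)
    simp only [indicator, snoc_mem_arrivalSet_iff, hu, true_and, mem_Ioi]
  · simp [snoc_mem_arrivalSet_iff, hu]

/-- The joint law of the first `n` arrival times of a unit-rate Poisson process. For `n ≠ 0` the
sup norm of an arrival vector is its last entry, and for `n = 0` it is the starting time `0`. -/
noncomputable def arrivalMeasure (n : ℕ) : Measure (Fin n → ℝ) :=
  (volume.restrict (arrivalSet n)).withDensity fun u => ENNReal.ofReal (exp (-‖u‖))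

lemma integral_arrivalMeasure {n : ℕ} (F : (Fin n → ℝ) → ℝ) :
    ∫ u, F u ∂(arrivalMeasure n) = ∫ u in arrivalSet n, exp (-‖u‖) * F u := by
  rw [arrivalMeasure, integral_withDensity_eq_integral_toReal_smul (by fun_prop) (by simp)]
  simp [ENNReal.toReal_ofReal (exp_pos _).le]

lemma integrable_arrivalMeasure_iff {n : ℕ} {F : (Fin n → ℝ) → ℝ} :
    Integrable F (arrivalMeasure n) ↔
      IntegrableOn (fun u => exp (-‖u‖) * F u) (arrivalSet n) := by
  rw [arrivalMeasure, integrable_withDensity_iff_integrable_smul' (by fun_prop) (by simp)]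
  simp [ENNReal.toReal_ofReal (exp_pos _).le, IntegrableOn]

lemma ae_mem_arrivalSet (n : ℕ) : ∀ᵐ u ∂(arrivalMeasure n), u ∈ arrivalSet n :=
  (withDensity_absolutelyContinuous _ _).ae_le (ae_restrict_mem (measurableSet_arrivalSet n))

/-- Given the first `n` arrival times, the waiting time for the next one is exponential. -/
lemma integral_arrivalMeasure_succ {n : ℕ} {F : (Fin (n + 1) → ℝ) → ℝ}
    (hF : Integrable F (arrivalMeasure (n + 1))) :
    ∫ v, F v ∂(arrivalMeasure (n + 1)) =
      ∫ u, ∫ t in Ioi ‖u‖, exp (‖u‖ - t) * F (Fin.snoc u t) ∂volume ∂(arrivalMeasure n) := by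
  rw [integral_arrivalMeasure, integral_arrivalMeasure,
    setIntegral_arrivalSet_succ (integrable_arrivalMeasure_iff.1 hF)]
  refine setIntegral_congr_fun (measurableSet_arrivalSet n) fun u hu => ?_
  simp only [← integral_const_mul]
  refine setIntegral_congr_fun measurableSet_Ioi fun t ht => ?_
  simp only [norm_eq_last_of_mem_arrivalSet (snoc_mem_arrivalSet_iff.2 ⟨hu, ht⟩), Fin.snoc_last,
    ← mul_assoc, ← exp_add]
  ring_nf

lemma integrable_eval_arrivalMeasure {g : ℝ → ℝ} (hg : LaplaceIntegrable g) {n : ℕ} (j : Fin n) :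
    Integrable (fun u => g (u j)) (arrivalMeasure n) := by
  -- The weight `exp (-‖u‖)` is at most the product weight `exp (-(∑ i, u i) / n)`.
  have hn : (0 : ℝ) < n := by exact_mod_cast j.pos
  let k (i : Fin n) (t : ℝ) : ℝ := exp (-(n : ℝ)⁻¹ * t) * if i = j then g t else 1
  have hk (i : Fin n) : IntegrableOn (k i) (Ioi 0) := by
    by_cases hij : i = j
    · simpa [k, hij] using hg _ (inv_pos.2 hn)
    · simpa [k, hij] using laplaceIntegrable_const 1 _ (inv_pos.2 hn)
  have hprod : IntegrableOn (fun u : Fin n → ℝ => ∏ i, k i (u i)) (arrivalSet n) := by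
    have h := Integrable.fintype_prod (μ := fun _ => volume.restrict (Ioi 0)) hk
    rw [← Measure.restrict_pi_pi, ← volume_pi] at h
    exact IntegrableOn.mono_set h fun u hu i _ => hu.2 i
  have hprod_eq (u : Fin n → ℝ) :
      ∏ i, k i (u i) = exp (-(n : ℝ)⁻¹ * ∑ i, u i) * g (u j) := by
    simp only [k, Finset.prod_mul_distrib, ← exp_sum, Finset.mul_sum, Finset.prod_ite_eq',
      Finset.mem_univ, if_true]
  have hmean_le (u : Fin n → ℝ) : (n : ℝ)⁻¹ * ∑ i, u i ≤ ‖u‖ := by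
    rw [inv_mul_le_iff₀ hn]
    simpa using Finset.sum_le_card_nsmul Finset.univ u ‖u‖ fun i _ =>
      (le_abs_self _).trans (norm_le_pi_norm u i)
  rw [integrable_arrivalMeasure_iff]
  refine (hprod.bdd_mul (f := fun u => exp ((n : ℝ)⁻¹ * ∑ i, u i - ‖u‖)) (c := 1)
    (by fun_prop) (ae_of_all _ fun u => ?_)).congr (ae_of_all _ fun u => ?_)
  · simpa using hmean_le u
  · simp only [hprod_eq, ← mul_assoc, ← exp_add]
    ring_nf

/-! ### The compensator identity -/

section Compensator

variable {h h' : ℝ → ℝ} (hcont : ContinuousOn h (Ici 0)) (hderiv : ∀ t > 0, HasDerivAt h (h' t) t)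
  (hL : LaplaceIntegrable h) (hL' : LaplaceIntegrable h')

include hL hL'

lemma integrable_compensator_arrivalMeasure (n : ℕ) :
    Integrable (fun u : Fin n → ℝ => (∑ j, h' (u j)) - h ‖u‖) (arrivalMeasure n) := by
  refine (integrable_finsetSum _ fun j _ => integrable_eval_arrivalMeasure hL' j).sub ?_
  cases n with
  | zero =>
    simp only [norm_of_subsingleton]
    rw [integrable_arrivalMeasure_iff]
    simp only [norm_of_subsingleton]
    exact integrableOn_const (toFinite _).isCompact.measure_lt_top.ne
  | succ n =>
    refine (integrable_eval_arrivalMeasure hL (Fin.last n)).congr ?_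
    filter_upwards [ae_mem_arrivalSet (n + 1)] with u hu
    rw [norm_eq_last_of_mem_arrivalSet hu]

include hcont hderiv

lemma setIntegral_Ioi_exp_sub_mul_deriv_sub {s : ℝ} (hs : 0 ≤ s) :
    ∫ t in Ioi s, exp (s - t) * (h' t - h t) = -h s := by
  have hint {g : ℝ → ℝ} (hg : LaplaceIntegrable g) :
      IntegrableOn (fun t => exp (s - t) * g t) (Ioi s) := by
    have hg₁ := ((hg 1 one_pos).mono_set (Ioi_subset_Ioi hs)).const_mul (exp s)
    simp only [← mul_assoc, ← exp_add, neg_one_mul, ← sub_eq_add_neg] at hg₁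
    exact hg₁
  have hd : ∀ t ∈ Ioi s,
      HasDerivAt (fun t => exp (s - t) * h t) (exp (s - t) * (h' t - h t)) t := fun t ht =>
    (((hasDerivAt_id t).const_sub s).exp.mul (hderiv t (hs.trans_lt ht))).congr_deriv
      (by simp only [id_eq]; ring)
  have hc : ContinuousWithinAt (fun t => exp (s - t) * h t) (Ici s) s :=
    (by fun_prop : Continuous fun t => exp (s - t)).continuousWithinAt.mul
      ((hcont s hs).mono (Ici_subset_Ici.2 hs))
  have hlim := tendsto_zero_of_hasDerivAt_of_integrableOn_Ioi hd (hint (hL'.sub hL)) (hint hL)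
  simpa using integral_Ioi_of_hasDerivAt_of_tendsto hc hd (hint (hL'.sub hL)) hlim

lemma integral_compensator_arrivalMeasure (h0 : h 0 = 0) (n : ℕ) :
    ∫ u : Fin n → ℝ, ((∑ j, h' (u j)) - h ‖u‖) ∂(arrivalMeasure n) = 0 := by
  induction n with
  | zero => simp [norm_of_subsingleton, h0]
  | succ n ih =>
    rw [integral_arrivalMeasure_succ (integrable_compensator_arrivalMeasure hL hL' (n + 1)), ← ih,
      integral_arrivalMeasure, integral_arrivalMeasure]
    refine setIntegral_congr_fun (measurableSet_arrivalSet n) fun u hu => ?_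
    have hmean := setIntegral_Ioi_exp_sub_mul_deriv_sub
      (h := fun t => h t - ∑ j, h' (u j)) (hcont.sub continuousOn_const)
      (fun t ht => (hderiv t ht).sub_const _) (hL.sub (laplaceIntegrable_const _)) hL'
      (norm_nonneg u)
    rw [neg_sub] at hmean
    simp only [← hmean]
    congr 1
    refine setIntegral_congr_fun measurableSet_Ioi fun t ht => ?_
    simp only [Fin.sum_univ_castSucc, Fin.snoc_castSucc, Fin.snoc_last,
      norm_eq_last_of_mem_arrivalSet (snoc_mem_arrivalSet_iff.2 ⟨hu, ht⟩)]
    ring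

end Compensator

/-! ### The GEV time change -/

/-- The support of the one-dimensional GEV law with parameters `(μ, σ, ξ)`. -/
def gevSupport (μ σ ξ : ℝ) : Set ℝ := {x | 0 < 1 + ξ * ((x - μ) / σ)}

/-- The expected number of points above `x` in the Poisson process whose largest point has the GEV
law with parameters `(μ, σ, ξ)`. It maps the `r` largest points to the first `r` arrival times of a
unit-rate Poisson process. -/
noncomputable def gevTime (μ σ ξ x : ℝ) : ℝ := (1 + ξ * ((x - μ) / σ)) ^ (-1 / ξ)

section TimeChange

variable {μ σ ξ x : ℝ}

lemma measurable_gevTime : Measurable (gevTime μ σ ξ) := by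
  unfold gevTime
  fun_prop

lemma gevTime_pos (hx : x ∈ gevSupport μ σ ξ) : 0 < gevTime μ σ ξ x :=
  rpow_pos_of_pos hx _

lemma log_gevTime (hx : x ∈ gevSupport μ σ ξ) :
    log (gevTime μ σ ξ x) = -1 / ξ * log (1 + ξ * ((x - μ) / σ)) :=
  log_rpow hx _

lemma gevTime_rpow_one_add (hξ : ξ ≠ 0) (hx : x ∈ gevSupport μ σ ξ) :
    gevTime μ σ ξ x ^ (1 + ξ) = (1 + ξ * ((x - μ) / σ)) ^ (-1 / ξ - 1) := by
  rw [gevTime, ← rpow_mul (le_of_lt hx)]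
  congr 1
  field_simp
  ring

lemma strictAntiOn_gevTime (hσ : 0 < σ) (hξ : ξ ≠ 0) :
    StrictAntiOn (gevTime μ σ ξ) (gevSupport μ σ ξ) := by
  intro x hx y hy hxy
  have hz : (x - μ) / σ < (y - μ) / σ := by gcongr
  rcases hξ.lt_or_gt with hneg | hpos
  · refine rpow_lt_rpow (le_of_lt hy) ?_ (div_pos_of_neg_of_neg (by norm_num) hneg)
    linarith [mul_lt_mul_of_neg_left hz hneg]
  · refine rpow_lt_rpow_of_neg hx ?_ (div_neg_of_neg_of_pos (by norm_num) hpos)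
    linarith [mul_lt_mul_of_pos_left hz hpos]

lemma surjOn_gevTime (hσ : σ ≠ 0) (hξ : ξ ≠ 0) :
    SurjOn (gevTime μ σ ξ) (gevSupport μ σ ξ) (Ioi 0) := by
  intro t ht
  have hx : 1 + ξ * ((μ + σ * ((t ^ (-ξ) - 1) / ξ) - μ) / σ) = t ^ (-ξ) := by
    field_simp
    ring
  refine ⟨μ + σ * ((t ^ (-ξ) - 1) / ξ), (rpow_pos_of_pos ht (-ξ)).trans_eq hx.symm, ?_⟩
  rw [gevTime, hx, ← rpow_mul (le_of_lt ht), show -ξ * (-1 / ξ) = 1 by field_simp, rpow_one]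

end TimeChange

/-- The derivative of `gevTime`, at a point whose time is `t`, when the parameters `(μ, σ, ξ)` move
with velocity `(m', s', k')`. -/
noncomputable def gevTimeVelocity (σ ξ m' s' k' t : ℝ) : ℝ :=
  m' / σ * t ^ (1 + ξ) + (s' / (σ * ξ) - k' / ξ ^ 2) * (t - t ^ (1 + ξ)) - k' / ξ * (t * log t)

/-- The derivative of the logarithm of the intensity `t ^ (1 + ξ) / σ` of the Poisson process, at a
point whose time is `t`, when the parameters `(μ, σ, ξ)` move with velocity `(m', s', k')`. -/
noncomputable def gevLogIntensityVelocity (σ ξ m' s' k' t : ℝ) : ℝ :=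
  (1 + ξ) * (gevTimeVelocity σ ξ m' s' k' t / t) + k' * log t - s' / σ

section Velocity

variable {σ ξ m' s' k' : ℝ}

lemma gevTimeVelocity_zero (hξ : -1 < ξ) : gevTimeVelocity σ ξ m' s' k' 0 = 0 := by
  simp [gevTimeVelocity, zero_rpow (by linarith : 1 + ξ ≠ 0)]

lemma continuous_gevTimeVelocity (hξ : -1 < ξ) : Continuous (gevTimeVelocity σ ξ m' s' k') := by
  have hrpow : Continuous fun t : ℝ => t ^ (1 + ξ) := continuous_rpow_const (by linarith)
  exact ((hrpow.const_mul _).add ((continuous_id.sub hrpow).const_mul _)).sub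
    (continuous_mul_log.const_mul _)

lemma laplaceIntegrable_gevTimeVelocity (hξ : -1 < ξ) :
    LaplaceIntegrable (gevTimeVelocity σ ξ m' s' k') := by
  have hid : LaplaceIntegrable fun t => t := by
    simpa using laplaceIntegrable_rpow (s := 1) (by norm_num)
  have hlog : LaplaceIntegrable fun t => t * log t := by
    simpa using laplaceIntegrable_rpow_mul_log (s := 1) (by norm_num)
  have hrpow := laplaceIntegrable_rpow (s := 1 + ξ) (by linarith)
  exact ((hrpow.const_mul _).add ((hid.sub hrpow).const_mul _)).sub (hlog.const_mul _)

lemma gevLogIntensityVelocity_eq (hσ : σ ≠ 0) (hξ : ξ ≠ 0) {t : ℝ} (ht : 0 < t) :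
    gevLogIntensityVelocity σ ξ m' s' k' t =
      m' / σ * ((1 + ξ) * t ^ ξ) + (s' / (σ * ξ) - k' / ξ ^ 2) * (1 - (1 + ξ) * t ^ ξ)
        - k' / ξ * (log t + 1) := by
  rw [gevLogIntensityVelocity, gevTimeVelocity, rpow_add ht, rpow_one]
  field_simp
  ring

lemma laplaceIntegrable_gevLogIntensityVelocity (hσ : σ ≠ 0) (hξ : ξ ≠ 0) (hξ' : -1 < ξ) :
    LaplaceIntegrable (gevLogIntensityVelocity σ ξ m' s' k') := by
  have hone := laplaceIntegrable_const 1
  have hlog : LaplaceIntegrable log := by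
    simpa using laplaceIntegrable_rpow_mul_log (s := 0) (by norm_num)
  have hrpow := (laplaceIntegrable_rpow hξ').const_mul (1 + ξ)
  exact (((hrpow.const_mul _).add ((hone.sub hrpow).const_mul _)).sub
    ((hlog.add hone).const_mul _)).congr fun t ht => (gevLogIntensityVelocity_eq hσ hξ ht).symm

/-- The time change turns the intensity into `-∂ gevTime / ∂x`, so this is the symmetry of the mixed
partial derivatives of `gevTime`, divided by the intensity. -/
lemma hasDerivAt_gevTimeVelocity (hσ : σ ≠ 0) (hξ : ξ ≠ 0) {t : ℝ} (ht : 0 < t) :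
    HasDerivAt (gevTimeVelocity σ ξ m' s' k') (gevLogIntensityVelocity σ ξ m' s' k' t) t := by
  have hrpow : HasDerivAt (fun t : ℝ => t ^ (1 + ξ)) ((1 + ξ) * t ^ ξ) t := by
    simpa using hasDerivAt_rpow_const (p := 1 + ξ) (Or.inl ht.ne')
  rw [gevLogIntensityVelocity_eq hσ hξ ht]
  exact ((hrpow.const_mul _).add (((hasDerivAt_id t).sub hrpow).const_mul _)).sub
    ((hasDerivAt_mul_log ht.ne').const_mul _)

end Velocity

section Derivative

variable {m s k : ℝ → ℝ} {θ m' s' k' : ℝ}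

lemma hasDerivAt_gevTime (hm : HasDerivAt m m' θ) (hs : HasDerivAt s s' θ) (hk : HasDerivAt k k' θ)
    (hσ : s θ ≠ 0) (hξ : k θ ≠ 0) {x : ℝ} (hx : x ∈ gevSupport (m θ) (s θ) (k θ)) :
    HasDerivAt (fun τ => gevTime (m τ) (s τ) (k τ) x)
      (gevTimeVelocity (s θ) (k θ) m' s' k' (gevTime (m θ) (s θ) (k θ) x)) θ := by
  have hbase := (hk.mul ((hm.const_sub x).div hs hσ)).const_add 1
  have hexp := (hasDerivAt_const θ (-1 : ℝ)).div hk hξ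
  refine (hbase.rpow hexp hx).congr_deriv ?_
  rw [gevTimeVelocity, gevTime_rpow_one_add hξ hx, log_gevTime hx]
  simp only [Pi.mul_apply, Pi.div_apply]
  set w := 1 + k θ * ((x - m θ) / s θ) with hw
  have hw0 : 0 < w := hx
  have hx_eq : x = m θ + s θ * ((w - 1) / k θ) := by rw [hw]; field_simp; ring
  have hgev : gevTime (m θ) (s θ) (k θ) x = w * w ^ (-1 / k θ - 1) := by
    rw [gevTime, ← hw, rpow_sub_one hw0.ne']
    field_simp
  have hpow : w ^ (-1 / k θ) = w * w ^ (-1 / k θ - 1) := by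
    rw [rpow_sub_one hw0.ne']
    field_simp
  rw [hgev, hpow]
  clear_value w
  subst hx_eq
  field_simp
  ring

/-- Moving the point by `δ` amounts to moving the location by `-δ`. -/
lemma hasDerivAt_gevTime_self {μ σ ξ x : ℝ} (hσ : σ ≠ 0) (hξ : ξ ≠ 0)
    (hx : x ∈ gevSupport μ σ ξ) :
    HasDerivAt (gevTime μ σ ξ) (-(gevTime μ σ ξ x ^ (1 + ξ) / σ)) x := by
  have h := hasDerivAt_gevTime (θ := x) (x := x) (m := fun y => μ + x - y)
    ((hasDerivAt_id x).const_sub (μ + x)) (hasDerivAt_const x σ) (hasDerivAt_const x ξ) hσ hξ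
    (by simpa using hx)
  convert h using 1
  · funext y
    simp only [gevTime, show x - (μ + x - y) = y - μ by ring]
  · simp [gevTimeVelocity, div_eq_inv_mul]

lemma gevrLogLik_eq {μ σ ξ : ℝ} {n : ℕ} {x : Fin (n + 1) → ℝ} (hξ : ξ ≠ 0)
    (hx : ∀ j, x j ∈ gevSupport μ σ ξ) :
    gevrLogLik (n + 1) x μ σ ξ =
      ∑ j, ((1 + ξ) * log (gevTime μ σ ξ (x j)) - log σ) - gevTime μ σ ξ (x (Fin.last n)) := by
  have hlast : (⟨n + 1 - 1, Nat.sub_lt n.succ_pos Nat.one_pos⟩ : Fin (n + 1)) = Fin.last n := rfl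
  have hlog (j : Fin (n + 1)) := log_gevTime (hx j)
  simp only [gevrLogLik, dif_pos n.succ_pos, hlast, hlog, Finset.sum_sub_distrib,
    ← Finset.mul_sum, Finset.sum_const, Finset.card_univ, Fintype.card_fin, nsmul_eq_mul]
  rw [gevTime]
  field_simp
  ring

lemma hasDerivAt_gevrLogLik (hm : HasDerivAt m m' θ) (hs : HasDerivAt s s' θ)
    (hk : HasDerivAt k k' θ) (hσ : s θ ≠ 0) (hξ : k θ ≠ 0) {n : ℕ} {x : Fin (n + 1) → ℝ}
    (hx : ∀ j, x j ∈ gevSupport (m θ) (s θ) (k θ)) :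
    HasDerivAt (fun τ => gevrLogLik (n + 1) x (m τ) (s τ) (k τ))
      (∑ j, gevLogIntensityVelocity (s θ) (k θ) m' s' k' (gevTime (m θ) (s θ) (k θ) (x j))
        - gevTimeVelocity (s θ) (k θ) m' s' k' (gevTime (m θ) (s θ) (k θ) (x (Fin.last n)))) θ := by
  have htime (j : Fin (n + 1)) := hasDerivAt_gevTime hm hs hk hσ hξ (hx j)
  have hterm (j : Fin (n + 1)) :
      HasDerivAt (fun τ => (1 + k τ) * log (gevTime (m τ) (s τ) (k τ) (x j)) - log (s τ))
        (gevLogIntensityVelocity (s θ) (k θ) m' s' k' (gevTime (m θ) (s θ) (k θ) (x j))) θ :=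
    (((hk.const_add 1).mul ((htime j).log (gevTime_pos (hx j)).ne')).sub (hs.log hσ)).congr_deriv
      (by rw [gevLogIntensityVelocity]; ring)
  refine ((HasDerivAt.fun_sum fun j _ => hterm j).sub (htime (Fin.last n))).congr_of_eventuallyEq ?_
  have hsupport (j : Fin (n + 1)) : ∀ᶠ τ in 𝓝 θ, x j ∈ gevSupport (m τ) (s τ) (k τ) :=
    ((hk.continuousAt.mul ((hm.continuousAt.const_sub (x j)).div hs.continuousAt hσ)).const_add
      1).eventually_const_lt (hx j)
  filter_upwards [hk.continuousAt.eventually_ne hξ, eventually_all.2 hsupport] with τ hξτ hxτ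
  exact gevrLogLik_eq hξτ hxτ

end Derivative

/-! ### Reduction of the GEV_r law to the Poisson process -/

lemma map_withDensity_comp {α β : Type*} [MeasurableSpace α] [MeasurableSpace β] {μ : Measure α}
    {f : α → β} {g : β → ENNReal} (hf : Measurable f) (hg : Measurable g) :
    (μ.withDensity (g ∘ f)).map f = (μ.map f).withDensity g := by
  ext A hA
  rw [Measure.map_apply hf hA, withDensity_apply _ (hf hA), withDensity_apply _ hA,
    setLIntegral_map hA hg hf]
  rfl

/-- The region `D_r` outside which the GEV_r density vanishes. -/
def gevrSupport (μ σ ξ : ℝ) (r : ℕ) : Set (Fin r → ℝ) :=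
  {x | StrictAnti x ∧ ∀ j, x j ∈ gevSupport μ σ ξ}

/-- The time change `gevTime` applied to each coordinate of a GEV_r vector. -/
noncomputable def gevrTimes (μ σ ξ : ℝ) (r : ℕ) (x : Fin r → ℝ) : Fin r → ℝ :=
  fun j => gevTime μ σ ξ (x j)

section Reduction

variable {μ σ ξ : ℝ} {r n : ℕ}

lemma measurableSet_gevrSupport : MeasurableSet (gevrSupport μ σ ξ r) := by
  simp only [gevrSupport, gevSupport, StrictAnti, mem_ofPred_eq, measurableSet_setOfPred]
  fun_prop

lemma measurable_gevrTimes : Measurable (gevrTimes μ σ ξ r) :=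
  measurable_pi_lambda _ fun j => measurable_gevTime.comp (measurable_pi_apply j)

lemma injOn_gevrTimes (hσ : 0 < σ) (hξ : ξ ≠ 0) :
    InjOn (gevrTimes μ σ ξ r) (gevrSupport μ σ ξ r) := fun _ hx _ hy hxy =>
  funext fun j => (strictAntiOn_gevTime hσ hξ).injOn (hx.2 j) (hy.2 j) (congrFun hxy j)

lemma gevrTimes_mem_arrivalSet (hσ : 0 < σ) (hξ : ξ ≠ 0) {x : Fin r → ℝ}
    (hx : x ∈ gevrSupport μ σ ξ r) : gevrTimes μ σ ξ r x ∈ arrivalSet r :=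
  ⟨fun i j hij => strictAntiOn_gevTime hσ hξ (hx.2 j) (hx.2 i) (hx.1 hij),
    fun j => gevTime_pos (hx.2 j)⟩

lemma image_gevrTimes (hσ : 0 < σ) (hξ : ξ ≠ 0) :
    gevrTimes μ σ ξ r '' gevrSupport μ σ ξ r = arrivalSet r := by
  refine Subset.antisymm ?_ fun u hu => ?_
  · exact image_subset_iff.2 fun x hx => gevrTimes_mem_arrivalSet hσ hξ hx
  choose x hx hxu using fun j => surjOn_gevTime (μ := μ) hσ.ne' hξ (hu.2 j)
  refine ⟨x, ⟨fun i j hij => ?_, hx⟩, funext hxu⟩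
  rw [← (strictAntiOn_gevTime hσ hξ).lt_iff_gt (hx i) (hx j), hxu, hxu]
  exact hu.1 hij

lemma hasFDerivAt_gevrTimes (hσ : σ ≠ 0) (hξ : ξ ≠ 0) {x : Fin r → ℝ}
    (hx : x ∈ gevrSupport μ σ ξ r) :
    HasFDerivAt (gevrTimes μ σ ξ r)
      (.pi fun j => (ContinuousLinearMap.toSpanSingleton ℝ
        (-(gevTime μ σ ξ (x j) ^ (1 + ξ) / σ))).comp (.proj j)) x :=
  hasFDerivAt_pi.2 fun j =>
    (hasDerivAt_gevTime_self hσ hξ (hx.2 j)).hasFDerivAt.comp x (hasFDerivAt_apply j x)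

lemma gevrDensity_eq_exp_gevrLogLik (hσ : 0 < σ) (hr : 0 < r) {x : Fin r → ℝ}
    (hx : x ∈ gevrSupport μ σ ξ r) :
    gevrDensity μ σ ξ r x = exp (gevrLogLik r x μ σ ξ) := by
  rw [gevrDensity, dif_pos ⟨hr, hx⟩, gevrLogLik, dif_pos hr, sub_sub, sub_eq_add_neg (_ * _),
    exp_add, neg_mul, exp_neg, exp_nat_mul, exp_log hσ]
  ring_nf

lemma gevrDensity_eq_prod_mul (hσ : 0 < σ) (hξ : ξ ≠ 0) {x : Fin (n + 1) → ℝ}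
    (hx : x ∈ gevrSupport μ σ ξ (n + 1)) :
    gevrDensity μ σ ξ (n + 1) x =
      (∏ j, gevTime μ σ ξ (x j) ^ (1 + ξ) / σ) * exp (-‖gevrTimes μ σ ξ (n + 1) x‖) := by
  have hterm (j : Fin (n + 1)) : exp ((1 + ξ) * log (gevTime μ σ ξ (x j)) - log σ) =
      gevTime μ σ ξ (x j) ^ (1 + ξ) / σ := by
    rw [exp_sub, exp_log hσ, rpow_def_of_pos (gevTime_pos (hx.2 j)), mul_comm]
  rw [gevrDensity_eq_exp_gevrLogLik hσ n.succ_pos hx, gevrLogLik_eq hξ hx.2,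
    norm_eq_last_of_mem_arrivalSet (gevrTimes_mem_arrivalSet hσ hξ hx), sub_eq_add_neg, exp_add,
    exp_sum]
  simp only [hterm, gevrTimes]

lemma gevrMeasure_eq_withDensity_restrict :
    gevrMeasure μ σ ξ r = (volume.restrict (gevrSupport μ σ ξ r)).withDensity
      fun x => ENNReal.ofReal (gevrDensity μ σ ξ r x) := by
  rw [gevrMeasure, ← withDensity_indicator measurableSet_gevrSupport, indicator_eq_self.2]
  refine fun x hx => by_contra fun hxD => hx ?_
  exact (congrArg ENNReal.ofReal (dif_neg fun h => hxD h.2)).trans ENNReal.ofReal_zero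

lemma ae_mem_gevrSupport : ∀ᵐ x ∂(gevrMeasure μ σ ξ r), x ∈ gevrSupport μ σ ξ r := by
  rw [gevrMeasure_eq_withDensity_restrict]
  exact (withDensity_absolutelyContinuous _ _).ae_le (ae_restrict_mem measurableSet_gevrSupport)

lemma measurePreserving_gevrTimes (hσ : 0 < σ) (hξ : ξ ≠ 0) :
    MeasurePreserving (gevrTimes μ σ ξ (n + 1)) (gevrMeasure μ σ ξ (n + 1))
      (arrivalMeasure (n + 1)) := by
  refine ⟨measurable_gevrTimes, ?_⟩
  have htime := measurable_gevTime (μ := μ) (σ := σ) (ξ := ξ)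
  have hexp : Measurable fun u : Fin (n + 1) → ℝ => ENNReal.ofReal (exp (-‖u‖)) := by fun_prop
  have hchange := map_withDensity_abs_det_fderiv_eq_addHaar volume
    measurableSet_gevrSupport.nullMeasurableSet
    (fun x hx => (hasFDerivAt_gevrTimes hσ.ne' hξ hx).hasFDerivWithinAt)
    (injOn_gevrTimes (r := n + 1) (μ := μ) hσ hξ)
  simp only [ContinuousLinearMap.det_pi, ContinuousLinearMap.det_toSpanSingleton,
    Finset.abs_prod, abs_neg] at hchange
  rw [arrivalMeasure, ← image_gevrTimes (μ := μ) hσ hξ, ← hchange,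
    ← map_withDensity_comp measurable_gevrTimes hexp,
    ← withDensity_mul _ (by fun_prop) (hexp.comp measurable_gevrTimes),
    gevrMeasure_eq_withDensity_restrict]
  congr 1
  refine withDensity_congr_ae ?_
  filter_upwards [ae_restrict_mem measurableSet_gevrSupport] with x hx
  have hpos (j : Fin (n + 1)) : 0 < gevTime μ σ ξ (x j) ^ (1 + ξ) / σ :=
    div_pos (rpow_pos_of_pos (gevTime_pos (hx.2 j)) _) hσ
  simp only [Pi.mul_apply, Function.comp_apply, gevrDensity_eq_prod_mul hσ hξ hx,
    abs_of_pos (hpos _)]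
  exact ENNReal.ofReal_mul (Finset.prod_nonneg fun j _ => (hpos j).le)

end Reduction

lemma deriv_gevrLogLik_ae_eq {m s k : ℝ → ℝ} {θ m' s' k' : ℝ} {n : ℕ} (hm : HasDerivAt m m' θ)
    (hs : HasDerivAt s s' θ) (hk : HasDerivAt k k' θ) (hσ : 0 < s θ) (hξ : k θ ≠ 0) :
    (fun x : Fin (n + 1) → ℝ => deriv (fun τ => gevrLogLik (n + 1) x (m τ) (s τ) (k τ)) θ)
      =ᵐ[gevrMeasure (m θ) (s θ) (k θ) (n + 1)]
    (fun u => (∑ j, gevLogIntensityVelocity (s θ) (k θ) m' s' k' (u j))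
      - gevTimeVelocity (s θ) (k θ) m' s' k' ‖u‖) ∘ gevrTimes (m θ) (s θ) (k θ) (n + 1) := by
  filter_upwards [ae_mem_gevrSupport] with x hx
  rw [(hasDerivAt_gevrLogLik hm hs hk hσ.ne' hξ hx.2).deriv, Function.comp_apply,
    norm_eq_last_of_mem_arrivalSet (gevrTimes_mem_arrivalSet hσ hξ hx)]
  rfl

theorem gevr_score_mean_zero_general {m s k : ℝ → ℝ} {θ : ℝ} (hm : DifferentiableAt ℝ m θ)
    (hs : DifferentiableAt ℝ s θ) (hk : DifferentiableAt ℝ k θ) (hσ : 0 < s θ) (hξ' : -1 < k θ)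
    (hξ : k θ ≠ 0) {r : ℕ} (hr : 1 ≤ r) :
    Integrable (fun x => deriv (fun τ => gevrLogLik r x (m τ) (s τ) (k τ)) θ)
        (gevrMeasure (m θ) (s θ) (k θ) r) ∧
      ∫ x, deriv (fun τ => gevrLogLik r x (m τ) (s τ) (k τ)) θ
        ∂(gevrMeasure (m θ) (s θ) (k θ) r) = 0 := by
  obtain ⟨n, rfl⟩ := Nat.exists_eq_add_of_le' hr
  have hT := measurePreserving_gevrTimes (μ := m θ) (n := n) hσ hξ
  have hscore := deriv_gevrLogLik_ae_eq (n := n) hm.hasDerivAt hs.hasDerivAt hk.hasDerivAt hσ hξ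
  have hL := laplaceIntegrable_gevTimeVelocity (σ := s θ) (m' := deriv m θ) (s' := deriv s θ)
    (k' := deriv k θ) hξ'
  have hL' := laplaceIntegrable_gevLogIntensityVelocity (m' := deriv m θ) (s' := deriv s θ)
    (k' := deriv k θ) hσ.ne' hξ hξ'
  have hint := integrable_compensator_arrivalMeasure hL hL' (n + 1)
  refine ⟨(hT.integrable_comp_of_integrable hint).congr hscore.symm, ?_⟩
  have hmean := integral_compensator_arrivalMeasure
    (continuous_gevTimeVelocity hξ').continuousOn
    (fun t ht => hasDerivAt_gevTimeVelocity hσ.ne' hξ ht) hL hL' (gevTimeVelocity_zero hξ') (n + 1)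
  rw [← hT.map_eq] at hint hmean
  rw [integral_congr_ae hscore, ← hmean]
  exact (integral_map hT.aemeasurable hint.aestronglyMeasurable).symm

/-- for `ξ > −1/2`, `ξ ≠ 0`, the score of the GEV_r model has
expectation zero under the GEV_r distribution, for each of the three
parameters `μ`, `σ`, `ξ`. -/
theorem gevr_score_mean_zero
    (μ σ ξ : ℝ) (hσ : 0 < σ) (hξhalf : -(1 / 2) < ξ) (hξ : ξ ≠ 0)
    (r : ℕ) (hr : 1 ≤ r) :
    (∫ x : Fin r → ℝ, deriv (fun μ' => gevrLogLik r x μ' σ ξ) μ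
        ∂(gevrMeasure μ σ ξ r)) = 0 ∧
    (∫ x : Fin r → ℝ, deriv (fun σ' => gevrLogLik r x μ σ' ξ) σ
        ∂(gevrMeasure μ σ ξ r)) = 0 ∧
    (∫ x : Fin r → ℝ, deriv (fun ξ' => gevrLogLik r x μ σ ξ') ξ
        ∂(gevrMeasure μ σ ξ r)) = 0 := by
  have hξ' : -1 < ξ := by linarith
  have hid (a : ℝ) : DifferentiableAt ℝ (fun τ : ℝ => τ) a := differentiableAt_fun_id
  have hconst (c a : ℝ) : DifferentiableAt ℝ (fun _ : ℝ => c) a := differentiableAt_const c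
  exact ⟨(gevr_score_mean_zero_general (hid μ) (hconst σ μ) (hconst ξ μ) hσ hξ' hξ hr).2,
    (gevr_score_mean_zero_general (hconst μ σ) (hid σ) (hconst ξ σ) hσ hξ' hξ hr).2,
    (gevr_score_mean_zero_general (hconst μ ξ) (hconst σ ξ) (hid ξ) hσ hξ' hξ hr).2⟩
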